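/- Let α > 2. For every M > 0, every r > 0 and every ℓ > m / (n(α−2)), the sublevel set Ω_{α,M} is ℓ-polynomially thin: ∫_{Ω_{α,M}} |Ω_{α,M} ∩ B(y,r)|^ℓ dy < ∞, where dy is Lebesgue measure and |·| of a set denotes its Lebesgue measure. -/

import Mathlib

/-!
Write `Q = N⁴ = |x|⁴ + 16|t|²` and `φ = N^α = Q^(α/4)`, so that `w_α = e^(-φ)` and, away from the
origin, `V_α = |∇_H φ|²/4 - (∑ X_j² φ)/2` (`VA_eq`). Skew-symmetry gives
`|∇_H Q|² = 16|x|⁶ + 256|J_t x|²`, and the Métivier condition, made quantitative by compactness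
(`exists_sqJ_ge`), makes this comparable to `|x|² Q`; moreover `∑ X_j² Q ≤ C|x|²`. Hence
`V_α ≥ |x|² Q^(α/4-1) (c Q^(α/4) - C)` (`exists_VA_ge`), so that on the sublevel set
`|x|² (1 + |t|)^(α-2)` is bounded (`exists_OmegaSet_bound`): the set is a tube around the centre of
the group whose radius decays like `|t|^(-(α-2)/2)`.

Two points of the tube at Kaplan distance less than `r` have central components at bounded distance
(`exists_central_dist`), so `|Ω ∩ B(y,r)|` is at most a constant times `(1 + |t_y|)^(-n(α-2))`
(`exists_volume_le`). The `ℓ`-th power of this bound is integrable over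
`{|x| ≤ C} × ℝ^m` as soon as `n(α-2)ℓ > m`.
-/

open MeasureTheory Filter
open scoped BigOperators ENNReal NNReal

noncomputable section

/-- Points of the Métivier group `G = ℝ^{2n} × ℝ^m`. -/
abbrev GrpPt (n m : ℕ) := (Fin (2*n) → ℝ) × (Fin m → ℝ)

/-- Euclidean norm on `Fin k → ℝ`. -/
def e2norm {k : ℕ} (x : Fin k → ℝ) : ℝ := Real.sqrt (∑ i, (x i)^2)

/-- Kaplan norm `N(x,t) = (|x|^4 + 16|t|^2)^(1/4)`. -/
def kN {n m : ℕ} (p : GrpPt n m) : ℝ := (e2norm p.1 ^ 4 + 16 * e2norm p.2 ^ 2) ^ ((1:ℝ)/4)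

/-- Group multiplication of the Métivier group. -/
def gmul {n m : ℕ} (J : Fin m → Matrix (Fin (2*n)) (Fin (2*n)) ℝ) (p q : GrpPt n m) : GrpPt n m :=
  (p.1 + q.1, p.2 + q.2 + fun k => (1/2 : ℝ) * ∑ i, (J k).mulVec p.1 i * q.1 i)

/-- Horizontal left-invariant vector field `X_j`. -/
def XD {n m : ℕ} (J : Fin m → Matrix (Fin (2*n)) (Fin (2*n)) ℝ)
    {E : Type*} [NormedAddCommGroup E] [NormedSpace ℝ E]
    (j : Fin (2*n)) (f : GrpPt n m → E) (p : GrpPt n m) : E :=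
  fderiv ℝ f p (Pi.single j 1, 0)
    + (1/2 : ℝ) • ∑ k, ((J k).mulVec p.1 j) • fderiv ℝ f p (0, Pi.single k 1)

/-- Squared length of the horizontal gradient. -/
def gradSq {n m : ℕ} (J : Fin m → Matrix (Fin (2*n)) (Fin (2*n)) ℝ)
    (f : GrpPt n m → ℝ) (p : GrpPt n m) : ℝ := ∑ j, (XD J j f p)^2

/-- Sub-Laplacian `L f = -∑ X_j (X_j f)`. -/
def LSub {n m : ℕ} (J : Fin m → Matrix (Fin (2*n)) (Fin (2*n)) ℝ)
    {E : Type*} [NormedAddCommGroup E] [NormedSpace ℝ E]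
    (f : GrpPt n m → E) (p : GrpPt n m) : E := - ∑ j, XD J j (XD J j f) p

/-- Weight `w_α = exp (-N^α)`. -/
def wA {n m : ℕ} (α : ℝ) (p : GrpPt n m) : ℝ := Real.exp (-(kN p ^ α))

/-- Potential `V_α = -(1/4) |grad w_α|²/w_α² - (1/2) (L w_α)/w_α`. -/
def VA {n m : ℕ} (J : Fin m → Matrix (Fin (2*n)) (Fin (2*n)) ℝ) (α : ℝ) (p : GrpPt n m) : ℝ :=
  -(1/4) * gradSq J (wA α) p / (wA α p)^2 - (1/2) * LSub J (wA α) p / wA α p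

/-- The sublevel set `Ω_{α,M}` of the potential `V_α`. -/
def OmegaSet {n m : ℕ} (J : Fin m → Matrix (Fin (2*n)) (Fin (2*n)) ℝ) (α M : ℝ) :
    Set (GrpPt n m) := {p | p ≠ 0 ∧ VA J α p ≤ M}

/-- Left-invariant ball of radius `r` centred at `g` for the Kaplan quasi-norm. -/
def kBall {n m : ℕ} (J : Fin m → Matrix (Fin (2*n)) (Fin (2*n)) ℝ) (g : GrpPt n m) (r : ℝ) :
    Set (GrpPt n m) := {h | kN (gmul J (-g.1, -g.2) h) < r}

/-! ### The Kaplan polynomial -/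

/-- The quadratic form `|x|²` (squared Euclidean norm; the norm `‖x‖` is the sup norm). -/
def sqN {k : ℕ} (x : Fin k → ℝ) : ℝ := ∑ i, (x i)^2

/-- The polynomial `Q = N⁴ = |x|⁴ + 16|t|²`. -/
def Q4 {n m : ℕ} (p : GrpPt n m) : ℝ := sqN p.1 ^ 2 + 16 * sqN p.2

/-- The value at `p` of the left-invariant vector field `X_j`, as a tangent vector. -/
def vX {n m : ℕ} (J : Fin m → Matrix (Fin (2*n)) (Fin (2*n)) ℝ) (j : Fin (2*n))
    (p : GrpPt n m) : GrpPt n m :=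
  (Pi.single j 1, fun k => (1/2 : ℝ) * (J k).mulVec p.1 j)

/-- The first derivative `X_j Q = 4|x|² x_j + 16 (J_t x)_j`. -/
def G1 {n m : ℕ} (J : Fin m → Matrix (Fin (2*n)) (Fin (2*n)) ℝ) (j : Fin (2*n))
    (p : GrpPt n m) : ℝ := 4 * sqN p.1 * p.1 j + 16 * ∑ k, p.2 k * (J k).mulVec p.1 j

/-- The second derivative `X_j² Q`, for skew-symmetric `J_k`. -/
def H2 {n m : ℕ} (J : Fin m → Matrix (Fin (2*n)) (Fin (2*n)) ℝ) (j : Fin (2*n))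
    (p : GrpPt n m) : ℝ := 4 * sqN p.1 + 8 * p.1 j ^ 2 + 8 * ∑ k, ((J k).mulVec p.1 j) ^ 2

lemma sqN_nonneg {k : ℕ} (x : Fin k → ℝ) : 0 ≤ sqN x := Finset.sum_nonneg fun _ _ => sq_nonneg _

lemma sq_le_sqN {k : ℕ} (x : Fin k → ℝ) (i : Fin k) : x i ^ 2 ≤ sqN x :=
  Finset.single_le_sum (f := fun i => x i ^ 2) (fun _ _ => sq_nonneg _) (Finset.mem_univ i)

lemma norm_sq_le_sqN {k : ℕ} (x : Fin k → ℝ) : ‖x‖ ^ 2 ≤ sqN x := by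
  have : ‖x‖ ≤ √(sqN x) := by
    refine (pi_norm_le_iff_of_nonneg (Real.sqrt_nonneg _)).2 fun i => ?_
    rw [Real.norm_eq_abs]
    exact Real.abs_le_sqrt (sq_le_sqN x i)
  calc ‖x‖ ^ 2 ≤ √(sqN x) ^ 2 := by gcongr
    _ = sqN x := Real.sq_sqrt (sqN_nonneg x)

lemma sqN_le {k : ℕ} (x : Fin k → ℝ) : sqN x ≤ k * ‖x‖ ^ 2 := by
  calc sqN x ≤ ∑ _i : Fin k, ‖x‖ ^ 2 := by
        refine Finset.sum_le_sum fun i _ => ?_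
        rw [← sq_abs, ← Real.norm_eq_abs]
        gcongr
        exact norm_le_pi_norm x i
    _ = k * ‖x‖ ^ 2 := by simp

lemma Q4_nonneg {n m : ℕ} (p : GrpPt n m) : 0 ≤ Q4 p := by
  have := sqN_nonneg p.2
  unfold Q4; positivity

lemma Q4_pos {n m : ℕ} {p : GrpPt n m} (hp : p ≠ 0) : 0 < Q4 p := by
  refine (Q4_nonneg p).lt_of_ne' fun h => hp ?_
  have h1 := norm_sq_le_sqN p.1
  have h2 := norm_sq_le_sqN p.2
  have h3 := sqN_nonneg p.2
  unfold Q4 at h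
  have e1 : sqN p.1 ^ 2 = 0 := by nlinarith [sq_nonneg (sqN p.1)]
  have e1' : sqN p.1 = 0 := by simpa using e1
  have e2 : sqN p.2 = 0 := by nlinarith [sq_nonneg (sqN p.1)]
  rw [e1'] at h1
  rw [e2] at h2
  have f1 : ‖p.1‖ = 0 := by nlinarith [norm_nonneg p.1]
  have f2 : ‖p.2‖ = 0 := by nlinarith [norm_nonneg p.2]
  exact Prod.ext (norm_eq_zero.1 f1) (norm_eq_zero.1 f2)

lemma kN_eq {n m : ℕ} (p : GrpPt n m) : kN p = Q4 p ^ ((1:ℝ)/4) := by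
  have h1 : e2norm p.1 ^ 4 = sqN p.1 ^ 2 := by
    rw [show (4:ℕ) = 2 * 2 from rfl, pow_mul]
    exact congrArg (· ^ 2) (Real.sq_sqrt (sqN_nonneg p.1))
  have h2 : e2norm p.2 ^ 2 = sqN p.2 := Real.sq_sqrt (sqN_nonneg p.2)
  rw [kN, h1, h2, Q4]

lemma wA_eq {n m : ℕ} (α : ℝ) : wA (n := n) (m := m) α = fun p => Real.exp (-(Q4 p ^ (α/4))) := by
  funext p
  rw [wA, kN_eq, ← Real.rpow_mul (Q4_nonneg p)]
  congr 3
  ring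

/-! ### Explicit formula for the potential -/

section Calculus

variable {n m : ℕ} (J : Fin m → Matrix (Fin (2*n)) (Fin (2*n)) ℝ)

lemma XD_eq (j : Fin (2*n)) (f : GrpPt n m → ℝ) (p : GrpPt n m) :
    XD J j f p = fderiv ℝ f p (vX J j p) := by
  have h : vX J j p = (Pi.single j 1, 0)
      + (1/2 : ℝ) • ∑ k, ((J k).mulVec p.1 j) • ((0, Pi.single k 1) : GrpPt n m) := by
    refine Prod.ext ?_ ?_
    · simp [vX, Prod.fst_sum]
    · funext k
      simp [vX, Prod.snd_sum, Finset.sum_apply, Pi.single_apply]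
  rw [h, map_add, map_smul, map_sum]
  simp only [map_smul, XD]

/-- `X_j f` is the derivative of `f` along the line through `p` in direction `X_j(p)`. -/
lemma XD_of_line {j : Fin (2*n)} {f : GrpPt n m → ℝ} {p : GrpPt n m} {d : ℝ}
    (hf : DifferentiableAt ℝ f p)
    (hd : HasDerivAt (fun s : ℝ => f (p + s • vX J j p)) d 0) : XD J j f p = d := by
  rw [XD_eq, ← hf.lineDeriv_eq_fderiv]
  exact hd.deriv

lemma differentiable_sqN {k : ℕ} : Differentiable ℝ (sqN (k := k)) := by
  unfold sqN; fun_prop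

lemma differentiable_Q4 : Differentiable ℝ (Q4 (n := n) (m := m)) := by
  unfold Q4 sqN; fun_prop

lemma differentiable_mulVec (k : Fin m) (j : Fin (2*n)) :
    Differentiable ℝ (fun p : GrpPt n m => (J k).mulVec p.1 j) := by
  unfold Matrix.mulVec dotProduct; fun_prop

lemma differentiable_G1 (j : Fin (2*n)) : Differentiable ℝ (G1 J j) := by
  have := differentiable_mulVec J
  unfold G1 sqN; fun_prop

lemma hasDerivAt_sqN {k : ℕ} (x v : Fin k → ℝ) :
    HasDerivAt (fun s : ℝ => sqN (x + s • v)) (2 * ∑ i, x i * v i) 0 := by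
  have h : HasDerivAt (fun s : ℝ => ∑ i, (x i + s * v i) ^ 2)
      (∑ i, ((2:ℕ) : ℝ) * (x i + 0 * v i) ^ (2 - 1) * (1 * v i)) 0 :=
    HasDerivAt.fun_sum fun i _ => (((hasDerivAt_id (0:ℝ)).mul_const (v i)).const_add (x i)).pow 2
  refine HasDerivAt.congr_deriv h ?_
  rw [Finset.mul_sum]
  refine Finset.sum_congr rfl fun i _ => ?_
  push_cast
  ring

lemma mulVec_diag (hskew : ∀ k, (J k).transpose = -(J k)) (k : Fin m) (j : Fin (2*n)) :
    J k j j = 0 := by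
  have := congrFun (congrFun (hskew k) j) j
  simp only [Matrix.transpose_apply, Matrix.neg_apply] at this
  linarith

lemma hasDerivAt_Q4 (j : Fin (2*n)) (p : GrpPt n m) :
    HasDerivAt (fun s : ℝ => Q4 (p + s • vX J j p)) (G1 J j p) 0 := by
  have h1 := (hasDerivAt_sqN p.1 (vX J j p).1).pow 2
  have h2 := (hasDerivAt_sqN p.2 (vX J j p).2).const_mul 16
  refine (h1.add h2).congr_deriv ?_
  simp only [vX, G1, zero_smul, add_zero, Finset.mul_sum, Pi.single_apply, mul_ite, mul_one,
    mul_zero, Finset.sum_ite_eq', Finset.mem_univ, if_true]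
  push_cast
  congr 1
  · ring
  · exact Finset.sum_congr rfl fun k _ => by ring

lemma hasDerivAt_G1 (hskew : ∀ k, (J k).transpose = -(J k)) (j : Fin (2*n)) (p : GrpPt n m) :
    HasDerivAt (fun s : ℝ => G1 J j (p + s • vX J j p)) (H2 J j p) 0 := by
  have h1 := hasDerivAt_sqN p.1 (vX J j p).1
  have hx : HasDerivAt (fun s : ℝ => p.1 j + s * 1) (1 * 1) 0 :=
    ((hasDerivAt_id (0:ℝ)).mul_const 1).const_add (p.1 j)
  -- `(J_k x)_j` is constant along `e_j`, because the diagonal of `J_k` vanishes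
  have h2 : HasDerivAt (fun s : ℝ => ∑ k, (p.2 k + s * (vX J j p).2 k) * (J k).mulVec p.1 j)
      (∑ k, 1 * (vX J j p).2 k * (J k).mulVec p.1 j) 0 :=
    HasDerivAt.fun_sum fun k _ =>
      (((hasDerivAt_id (0:ℝ)).mul_const _).const_add (p.2 k)).mul_const _
  have h := ((h1.const_mul 4).mul hx).add (h2.const_mul 16)
  have hfun : (fun s : ℝ => G1 J j (p + s • vX J j p)) =
      (fun s : ℝ => 4 * sqN (p.1 + s • (vX J j p).1)) * (fun s : ℝ => p.1 j + s * 1)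
        + fun s : ℝ => 16 * ∑ k, (p.2 k + s * (vX J j p).2 k) * (J k).mulVec p.1 j := by
    funext s
    simp [G1, vX, Matrix.mulVec_add, Matrix.mulVec_smul, mulVec_diag J hskew]
  rw [hfun]
  refine h.congr_deriv ?_
  simp only [vX, H2, zero_smul, add_zero, Finset.mul_sum, Pi.single_apply, mul_ite, mul_one,
    mul_zero, Finset.sum_ite_eq', Finset.mem_univ, if_true]
  have : ∑ k, 16 * (1 * (1/2 * (J k).mulVec p.1 j) * (J k).mulVec p.1 j)
      = ∑ k, 8 * (J k).mulVec p.1 j ^ 2 := Finset.sum_congr rfl fun k _ => by ring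
  simp only [one_mul] at this ⊢
  rw [this]
  ring

lemma XD_wA (α : ℝ) (j : Fin (2*n)) {p : GrpPt n m} (hp : 0 < Q4 p) :
    XD J j (wA α) p =
      -(Real.exp (-(Q4 p ^ (α/4))) * ((α/4) * Q4 p ^ (α/4 - 1) * G1 J j p)) := by
  rw [wA_eq]
  refine XD_of_line J ?_ ?_
  · exact (((differentiable_Q4 p).rpow_const (Or.inl hp.ne')).neg).exp
  · have hq := hasDerivAt_Q4 J j p
    have h := ((hq.rpow_const (p := α/4) (Or.inl (by simpa using hp.ne'))).neg).exp
    refine h.congr_deriv ?_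
    simp
    ring

lemma XD_XD_wA (hskew : ∀ k, (J k).transpose = -(J k)) (α : ℝ) (j : Fin (2*n))
    {p : GrpPt n m} (hp : 0 < Q4 p) :
    XD J j (XD J j (wA α)) p =
      Real.exp (-(Q4 p ^ (α/4))) * (((α/4) * Q4 p ^ (α/4 - 1) * G1 J j p) ^ 2
        - (α/4) * (α/4 - 1) * Q4 p ^ (α/4 - 2) * G1 J j p ^ 2
        - (α/4) * Q4 p ^ (α/4 - 1) * H2 J j p) := by
  have hev : XD J j (wA α) =ᶠ[nhds p] fun p =>
      -(Real.exp (-(Q4 p ^ (α/4))) * ((α/4) * Q4 p ^ (α/4 - 1) * G1 J j p)) := by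
    filter_upwards [differentiable_Q4.continuous.continuousAt.eventually_const_lt hp] with q hq
    exact XD_wA J α j hq
  rw [XD_eq, hev.fderiv_eq, ← XD_eq]
  have hd := differentiable_Q4 p
  refine XD_of_line J ?_ ?_
  · exact (((hd.rpow_const (Or.inl hp.ne')).neg.exp).mul
      (((hd.rpow_const (Or.inl hp.ne')).const_mul _).mul (differentiable_G1 J j p))).neg
  · have hq := hasDerivAt_Q4 J j p
    have hne : Q4 (p + (0:ℝ) • vX J j p) ≠ 0 := by simpa using hp.ne'
    have h := (((hq.rpow_const (p := α/4) (Or.inl hne)).neg.exp).mul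
      (((hq.rpow_const (p := α/4-1) (Or.inl hne)).const_mul (α/4)).mul
        (hasDerivAt_G1 J hskew j p))).neg
    refine h.congr_deriv ?_
    simp only [zero_smul, add_zero, show α/4 - 1 - 1 = α/4 - 2 by ring, Pi.neg_apply, Pi.mul_apply]
    ring

/-- The explicit potential: with `φ = N^α = Q^(α/4)` one has
`V = |∇φ|²/4 - (∑ X_j² φ)/2`. -/
lemma VA_eq (hskew : ∀ k, (J k).transpose = -(J k)) (α : ℝ) {p : GrpPt n m} (hp : 0 < Q4 p) :
    VA J α p = (1/4) * (α/4 * Q4 p ^ (α/4 - 1)) ^ 2 * ∑ j, G1 J j p ^ 2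
      - (1/2) * ((α/4) * (α/4 - 1) * Q4 p ^ (α/4 - 2) * (∑ j, G1 J j p ^ 2)
        + (α/4) * Q4 p ^ (α/4 - 1) * ∑ j, H2 J j p) := by
  have hw : wA α p = Real.exp (-(Q4 p ^ (α/4))) := congrFun (wA_eq α) p
  set E := Real.exp (-(Q4 p ^ (α/4))) with hE
  have hE0 : E ≠ 0 := (Real.exp_pos _).ne'
  have h1 : gradSq J (wA α) p = E ^ 2 * ((α/4 * Q4 p ^ (α/4 - 1)) ^ 2 * ∑ j, G1 J j p ^ 2) := by
    simp only [gradSq, XD_wA J α _ hp, Finset.mul_sum]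
    exact Finset.sum_congr rfl fun j _ => by ring
  have h2 : LSub J (wA α) p = -(E * ((α/4 * Q4 p ^ (α/4 - 1)) ^ 2 * (∑ j, G1 J j p ^ 2)
      - (α/4) * (α/4 - 1) * Q4 p ^ (α/4 - 2) * (∑ j, G1 J j p ^ 2)
      - (α/4) * Q4 p ^ (α/4 - 1) * ∑ j, H2 J j p)) := by
    simp only [LSub, XD_XD_wA J hskew α _ hp, Finset.mul_sum, ← Finset.sum_sub_distrib]
    congr 1
    exact Finset.sum_congr rfl fun j _ => by ring
  rw [VA, h1, h2, hw]
  field_simp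
  ring

end Calculus

/-! ### Bounds for the potential and the geometry of the sublevel set -/

section Bounds

variable {n m : ℕ} (J : Fin m → Matrix (Fin (2*n)) (Fin (2*n)) ℝ)

/-- The sum of the squared Hilbert–Schmidt norms of the `J_k`. -/
def hsJ {n m : ℕ} (J : Fin m → Matrix (Fin (2*n)) (Fin (2*n)) ℝ) : ℝ := ∑ k, ∑ j, ∑ i, J k j i ^ 2

lemma hsJ_nonneg : 0 ≤ hsJ J :=
  Finset.sum_nonneg fun _ _ => Finset.sum_nonneg fun _ _ => Finset.sum_nonneg fun _ _ => sq_nonneg _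

lemma sum_mulVec_sq_le (x : Fin (2*n) → ℝ) :
    ∑ k, ∑ j, ((J k).mulVec x j) ^ 2 ≤ hsJ J * sqN x := by
  have h : ∀ k j, ((J k).mulVec x j) ^ 2 ≤ (∑ i, J k j i ^ 2) * sqN x := fun k j =>
    Finset.sum_mul_sq_le_sq_mul_sq Finset.univ (J k j) x
  simp only [hsJ, Finset.sum_mul (s := Finset.univ) (f := fun k => ∑ j, ∑ i, J k j i ^ 2),
    Finset.sum_mul (s := Finset.univ) (f := fun j => ∑ i, J _ j i ^ 2)]
  exact Finset.sum_le_sum fun k _ => Finset.sum_le_sum fun j _ => h k j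

/-- The squared length `|J_t x|²`. -/
def sqJ {n m : ℕ} (J : Fin m → Matrix (Fin (2*n)) (Fin (2*n)) ℝ) (p : GrpPt n m) : ℝ :=
  ∑ j, (∑ k, p.2 k * (J k).mulVec p.1 j) ^ 2

lemma sqJ_nonneg (p : GrpPt n m) : 0 ≤ sqJ J p := Finset.sum_nonneg fun _ _ => sq_nonneg _

lemma sqJ_le (p : GrpPt n m) : sqJ J p ≤ hsJ J * sqN p.1 * sqN p.2 := by
  calc sqJ J p ≤ ∑ j, sqN p.2 * ∑ k, ((J k).mulVec p.1 j) ^ 2 :=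
        Finset.sum_le_sum fun j _ => Finset.sum_mul_sq_le_sq_mul_sq _ _ _
    _ = sqN p.2 * ∑ k, ∑ j, ((J k).mulVec p.1 j) ^ 2 := by
        rw [← Finset.mul_sum, Finset.sum_comm]
    _ ≤ sqN p.2 * (hsJ J * sqN p.1) :=
        mul_le_mul_of_nonneg_left (sum_mulVec_sq_le J p.1) (sqN_nonneg _)
    _ = _ := by ring

/-- Quantitative form of the Métivier condition, `|J_t x|² ≥ c |x|² |t|²`; it follows by
homogeneity from compactness of the product of two unit spheres. -/
lemma exists_sqJ_ge (hMet : ∀ t : Fin m → ℝ, t ≠ 0 → IsUnit (∑ k, t k • J k)) :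
    ∃ c : ℝ, 0 < c ∧ ∀ p : GrpPt n m, c * sqN p.1 * sqN p.2 ≤ sqJ J p := by
  have hmv := differentiable_mulVec J
  have hcont : Continuous (sqJ J) := by
    have : Differentiable ℝ (sqJ J) := by unfold sqJ; fun_prop
    exact this.continuous
  have hpos : ∀ p : GrpPt n m, p.1 ≠ 0 → p.2 ≠ 0 → 0 < sqJ J p := by
    intro p hx ht
    refine (sqJ_nonneg J p).lt_of_ne' fun h0 => hx ?_
    have hz : (∑ k, p.2 k • J k).mulVec p.1 = 0 := by
      funext j
      have := (Finset.sum_eq_zero_iff_of_nonneg fun _ _ => sq_nonneg _).1 h0 j (Finset.mem_univ j)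
      simpa [Matrix.sum_mulVec, Matrix.smul_mulVec, Finset.sum_apply] using this
    exact Matrix.mulVec_injective_of_isUnit (hMet p.2 ht) (by simpa using hz)
  set S : Set (GrpPt n m) := Metric.sphere 0 1 ×ˢ Metric.sphere 0 1 with hS
  have hcomp : IsCompact S := (isCompact_sphere _ _).prod (isCompact_sphere _ _)
  obtain ⟨c, hc, hcS⟩ : ∃ c : ℝ, 0 < c ∧ ∀ p ∈ S, c ≤ sqJ J p := by
    rcases S.eq_empty_or_nonempty with he | hne
    · exact ⟨1, one_pos, by simp [he]⟩
    · obtain ⟨p, hp, hmin⟩ := hcomp.exists_isMinOn hne hcont.continuousOn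
      refine ⟨sqJ J p, hpos p ?_ ?_, fun q hq => hmin hq⟩
      · exact ne_zero_of_mem_unit_sphere (⟨p.1, hp.1⟩ : Metric.sphere (0 : Fin (2*n) → ℝ) 1)
      · exact ne_zero_of_mem_unit_sphere (⟨p.2, hp.2⟩ : Metric.sphere (0 : Fin m → ℝ) 1)
  have hhom : ∀ p : GrpPt n m, c * (‖p.1‖ ^ 2 * ‖p.2‖ ^ 2) ≤ sqJ J p := by
    intro p
    by_cases hx : p.1 = 0
    · simpa [hx] using sqJ_nonneg J p
    by_cases ht : p.2 = 0
    · simpa [ht] using sqJ_nonneg J p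
    have hx' := norm_ne_zero_iff.2 hx
    have ht' := norm_ne_zero_iff.2 ht
    have h := hcS (‖p.1‖⁻¹ • p.1, ‖p.2‖⁻¹ • p.2)
      ⟨by simp [norm_smul, hx'], by simp [norm_smul, ht']⟩
    have hs : sqJ J (‖p.1‖⁻¹ • p.1, ‖p.2‖⁻¹ • p.2) = (‖p.1‖⁻¹ * ‖p.2‖⁻¹) ^ 2 * sqJ J p := by
      simp only [sqJ, Matrix.mulVec_smul, Pi.smul_apply, smul_eq_mul]
      rw [Finset.mul_sum]
      refine Finset.sum_congr rfl fun j _ => ?_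
      rw [← mul_pow, Finset.mul_sum]
      congr 1
      exact Finset.sum_congr rfl fun k _ => by ring
    rw [hs] at h
    calc c * (‖p.1‖ ^ 2 * ‖p.2‖ ^ 2)
        ≤ ((‖p.1‖⁻¹ * ‖p.2‖⁻¹) ^ 2 * sqJ J p) * (‖p.1‖ ^ 2 * ‖p.2‖ ^ 2) := by gcongr
      _ = sqJ J p := by field_simp
  -- `|x|² ≤ 2n ‖x‖²` and `|t|² ≤ m ‖t‖²`; the `+ 1` keeps the denominator positive
  refine ⟨c / ((2*n : ℕ) * m + 1), by positivity, fun p => le_trans ?_ (hhom p)⟩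
  have h1 := sqN_le p.1
  have h2 := sqN_le p.2
  have h3 : sqN p.1 * sqN p.2 ≤ ((2*n : ℕ) * ‖p.1‖ ^ 2) * (m * ‖p.2‖ ^ 2) :=
    mul_le_mul h1 h2 (sqN_nonneg _) (by positivity)
  rw [mul_assoc, div_mul_eq_mul_div, div_le_iff₀ (by positivity), mul_assoc]
  refine mul_le_mul_of_nonneg_left ?_ hc.le
  nlinarith [sq_nonneg (‖p.1‖ * ‖p.2‖)]

lemma sum_mul_mulVec_self (hskew : ∀ k, (J k).transpose = -(J k)) (k : Fin m)
    (x : Fin (2*n) → ℝ) : ∑ j, x j * (J k).mulVec x j = 0 := by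
  have h : x ⬝ᵥ (J k).mulVec x = -(x ⬝ᵥ (J k).mulVec x) := by
    conv_lhs => rw [Matrix.dotProduct_mulVec, ← Matrix.mulVec_transpose, hskew k,
      Matrix.neg_mulVec, neg_dotProduct, dotProduct_comm]
  have : x ⬝ᵥ (J k).mulVec x = 0 := by linarith
  exact this

/-- `|∇_H Q|² = 16|x|⁶ + 256|J_t x|²`: the mixed term vanishes since `⟨x, J_t x⟩ = 0`. -/
lemma sum_G1_sq (hskew : ∀ k, (J k).transpose = -(J k)) (p : GrpPt n m) :
    ∑ j, G1 J j p ^ 2 = 16 * sqN p.1 ^ 3 + 256 * sqJ J p := by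
  have hcross : ∑ j, p.1 j * ∑ k, p.2 k * (J k).mulVec p.1 j = 0 := by
    simp only [Finset.mul_sum]
    rw [Finset.sum_comm]
    refine Finset.sum_eq_zero fun k _ => ?_
    have := sum_mul_mulVec_self J hskew k p.1
    calc _ = p.2 k * ∑ j, p.1 j * (J k).mulVec p.1 j := by
          rw [Finset.mul_sum]; exact Finset.sum_congr rfl fun j _ => by ring
      _ = 0 := by rw [this, mul_zero]
  calc ∑ j, G1 J j p ^ 2
      = ∑ j, (16 * sqN p.1 ^ 2 * p.1 j ^ 2
          + 128 * sqN p.1 * (p.1 j * ∑ k, p.2 k * (J k).mulVec p.1 j)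
          + 256 * (∑ k, p.2 k * (J k).mulVec p.1 j) ^ 2) :=
        Finset.sum_congr rfl fun j _ => by rw [G1]; ring
    _ = 16 * sqN p.1 ^ 2 * sqN p.1 + 128 * sqN p.1 * 0 + 256 * sqJ J p := by
        rw [Finset.sum_add_distrib, Finset.sum_add_distrib, ← Finset.mul_sum, ← Finset.mul_sum,
          ← Finset.mul_sum, hcross]
        rfl
    _ = _ := by ring

lemma sum_H2_le (p : GrpPt n m) :
    ∑ j, H2 J j p ≤ (8 * n + 8 + 8 * hsJ J) * sqN p.1 := by
  have h : ∑ j, H2 J j p = 8 * n * sqN p.1 + 8 * sqN p.1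
      + 8 * ∑ k, ∑ j, ((J k).mulVec p.1 j) ^ 2 := by
    simp only [H2, Finset.sum_add_distrib, ← Finset.mul_sum]
    rw [Finset.sum_comm]
    simp [sqN]
    ring
  rw [h]
  linarith [sum_mulVec_sq_le J p.1]

/-- Lower bound for the potential, `V ≥ |x|² Q^(α/4-1) (c Q^(α/4) - C)`. -/
lemma exists_VA_ge (hskew : ∀ k, (J k).transpose = -(J k))
    (hMet : ∀ t : Fin m → ℝ, t ≠ 0 → IsUnit (∑ k, t k • J k)) {α : ℝ} (hα : 2 < α) :
    ∃ c C : ℝ, 0 < c ∧ 0 < C ∧ ∀ p : GrpPt n m, 0 < Q4 p →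
      sqN p.1 * Q4 p ^ (α/4 - 1) * (c * Q4 p ^ (α/4) - C) ≤ VA J α p := by
  obtain ⟨c₀, hc₀, hlow⟩ := exists_sqJ_ge J hMet
  set B := hsJ J with hB
  have hB0 : 0 ≤ B := hsJ_nonneg J
  set β := α/4 with hβ
  have hβ0 : 0 < β := by rw [hβ]; linarith
  set c₁ := min 16 (16 * c₀) with hc₁
  have hc₁0 : 0 < c₁ := by rw [hc₁]; positivity
  set C₁ := 16 + 16 * B with hC₁
  set C₂ := 8 * n + 8 + 8 * B with hC₂
  refine ⟨(1/4) * β ^ 2 * c₁, (1/2) * (β * |β - 1| * C₁ + β * C₂), by positivity, by positivity,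
    fun p hp => ?_⟩
  rw [VA_eq J hskew α hp, ← hβ]
  set q := Q4 p with hq
  set S := ∑ j, G1 J j p ^ 2 with hS
  have ha := sqN_nonneg p.1
  have hb := sqN_nonneg p.2
  have hqdef : q = sqN p.1 ^ 2 + 16 * sqN p.2 := rfl
  have hSeq := sum_G1_sq J hskew p
  rw [← hS] at hSeq
  have hS1 : c₁ * (sqN p.1 * q) ≤ S := by
    have e1 : c₁ * sqN p.1 ^ 3 ≤ 16 * sqN p.1 ^ 3 := by
      gcongr; exact min_le_left _ _
    have e2 : c₁ * (sqN p.1 * sqN p.2) ≤ 16 * c₀ * (sqN p.1 * sqN p.2) := by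
      gcongr; exact min_le_right _ _
    have := hlow p
    rw [hqdef, hSeq]
    nlinarith
  have hS2 : S ≤ C₁ * (sqN p.1 * q) := by
    have := sqJ_le J p
    rw [← hB] at this
    have e : 0 ≤ B * sqN p.1 ^ 3 := by positivity
    have e' : 0 ≤ sqN p.1 * sqN p.2 := by positivity
    rw [hqdef, hSeq, hC₁]
    nlinarith
  have hS0 : 0 ≤ S := Finset.sum_nonneg fun _ _ => sq_nonneg _
  have hT := sum_H2_le J p
  rw [← hB, ← hC₂] at hT
  set T := ∑ j, H2 J j p with hTdef
  set u := q ^ (β - 1) with hu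
  have hu0 : 0 < u := Real.rpow_pos_of_pos hp _
  have hub : q ^ β = u * q := by
    rw [hu, Real.rpow_sub_one hp.ne', div_mul_cancel₀ _ hp.ne']
  have hub2 : q ^ (β - 2) * q = u := by
    rw [hu, show β - 2 = β - 1 - 1 by ring, Real.rpow_sub_one hp.ne' (β - 1),
      div_mul_cancel₀ _ hp.ne']
  have hv0 : 0 < q ^ (β - 2) := Real.rpow_pos_of_pos hp _
  rw [hub]
  have t1 : (1/4) * (β * u) ^ 2 * (c₁ * (sqN p.1 * q)) ≤ (1/4) * (β * u) ^ 2 * S := by gcongr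
  have t2 : β * (β - 1) * q ^ (β - 2) * S ≤ β * |β - 1| * (C₁ * sqN p.1 * u) := by
    calc β * (β - 1) * q ^ (β - 2) * S ≤ β * |β - 1| * q ^ (β - 2) * S := by
          gcongr; exact le_abs_self _
      _ ≤ β * |β - 1| * q ^ (β - 2) * (C₁ * (sqN p.1 * q)) := by gcongr
      _ = β * |β - 1| * (C₁ * sqN p.1 * (q ^ (β - 2) * q)) := by ring
      _ = _ := by rw [hub2]
  have t3 : β * u * T ≤ β * u * (C₂ * sqN p.1) := by gcongr
  linear_combination t1 + (1/2) * t2 + (1/2) * t3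

/-- On the sublevel set `|x|² (1 + ‖t‖)^(α-2)` is bounded. -/
lemma exists_OmegaSet_bound (hskew : ∀ k, (J k).transpose = -(J k))
    (hMet : ∀ t : Fin m → ℝ, t ≠ 0 → IsUnit (∑ k, t k • J k)) {α : ℝ} (hα : 2 < α)
    {M : ℝ} (hM : 0 < M) :
    ∃ K : ℝ, 0 < K ∧ ∀ p ∈ OmegaSet J α M, sqN p.1 * (1 + ‖p.2‖) ^ (α - 2) ≤ K := by
  obtain ⟨c, C, hc, hC, hV⟩ := exists_VA_ge J hskew hMet hα
  set R : ℝ := max 1 ((2 * C / c) ^ (α/4)⁻¹) with hR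
  have hR1 : 1 ≤ R := le_max_left _ _
  have hγ : 0 ≤ (α - 2)/2 := by linarith
  refine ⟨4 ^ ((α - 2)/2) * (2 * M / c) + (1 + R) * (2 + 2 * R) ^ ((α - 2)/2), by positivity,
    fun p hp => ?_⟩
  have hq0 := Q4_pos hp.1
  have hqdef : Q4 p = sqN p.1 ^ 2 + 16 * sqN p.2 := rfl
  have ha := sqN_nonneg p.1
  have hb := sqN_nonneg p.2
  have ht := norm_sq_le_sqN p.2
  have hsq : (1 + ‖p.2‖) ^ 2 ≤ 2 + 2 * Q4 p := by
    nlinarith [sq_nonneg (1 - ‖p.2‖), sq_nonneg (sqN p.1)]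
  have hpow : (1 + ‖p.2‖) ^ (α - 2) = ((1 + ‖p.2‖) ^ 2) ^ ((α - 2)/2) := by
    rw [← Real.rpow_natCast, ← Real.rpow_mul (by positivity)]
    congr 1
    push_cast
    ring
  rw [hpow]
  rcases le_total (Q4 p) R with h | h
  · have e1 : sqN p.1 ≤ 1 + R := by nlinarith [sq_nonneg (sqN p.1 - 1)]
    have e2 : ((1 + ‖p.2‖) ^ 2) ^ ((α - 2)/2) ≤ (2 + 2 * R) ^ ((α - 2)/2) :=
      Real.rpow_le_rpow (by positivity) (by linarith) hγ
    have : 0 ≤ (4:ℝ) ^ ((α - 2)/2) * (2 * M / c) := by positivity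
    have := mul_le_mul e1 e2 (by positivity) (by positivity)
    linarith
  · have hq1 : 1 ≤ Q4 p := hR1.trans h
    have hα4 : 0 < α/4 := by linarith
    have hbig : 2 * C / c ≤ Q4 p ^ (α/4) := by
      rw [← Real.rpow_inv_le_iff_of_pos (by positivity) hq0.le hα4]
      exact (le_max_right _ _).trans h
    rw [div_le_iff₀ hc] at hbig
    have hu0 : 0 < Q4 p ^ (α/4 - 1) := Real.rpow_pos_of_pos hq0 _
    have h1 : sqN p.1 * Q4 p ^ (α/4 - 1) * (c/2 * Q4 p ^ (α/4)) ≤ M :=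
      (mul_le_mul_of_nonneg_left (by linarith) (by positivity)).trans ((hV p hq0).trans hp.2)
    have hcomb : Q4 p ^ (α/4 - 1) * Q4 p ^ (α/4) = Q4 p ^ ((α - 2)/2) := by
      rw [← Real.rpow_add hq0]; congr 1; ring
    have h2 : sqN p.1 * Q4 p ^ ((α - 2)/2) ≤ 2 * M / c := by
      rw [le_div_iff₀ hc, ← hcomb]
      linarith
    have e2 : ((1 + ‖p.2‖) ^ 2) ^ ((α - 2)/2) ≤ (4 * Q4 p) ^ ((α - 2)/2) :=
      Real.rpow_le_rpow (by positivity) (by linarith) hγ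
    rw [Real.mul_rpow (by norm_num) hq0.le] at e2
    have e3 : 0 ≤ (1 + R) * (2 + 2 * R) ^ ((α - 2)/2) := by positivity
    calc _ ≤ sqN p.1 * (4 ^ ((α - 2)/2) * Q4 p ^ ((α - 2)/2)) := by gcongr
      _ = 4 ^ ((α - 2)/2) * (sqN p.1 * Q4 p ^ ((α - 2)/2)) := by ring
      _ ≤ 4 ^ ((α - 2)/2) * (2 * M / c) := by gcongr
      _ ≤ _ := by linarith

/-- Two points of the sublevel set at Kaplan distance less than `r` have central components at
bounded distance: the twist `⟨J_k x, x'⟩/2` is bounded because `x` and `x'` are. -/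
lemma exists_central_dist {K r : ℝ} (hK : 0 < K) (hr : 0 < r) :
    ∃ D : ℝ, 0 < D ∧ ∀ y h : GrpPt n m, sqN y.1 ≤ K → sqN h.1 ≤ K → h ∈ kBall J y r →
      ‖h.2 - y.2‖ ≤ D := by
  have hB0 := hsJ_nonneg J
  refine ⟨r ^ 2 + (hsJ J + 1) * K, by positivity, fun y h hy hh hball => ?_⟩
  have hN : kN (gmul J (-y.1, -y.2) h) < r := hball
  set z := gmul J (-y.1, -y.2) h with hz
  have hQ : Q4 z < r ^ 4 := by
    rw [kN_eq] at hN
    have := pow_lt_pow_left₀ hN (Real.rpow_nonneg (Q4_nonneg z) _) (n := 4) (by norm_num)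
    rwa [← Real.rpow_natCast, ← Real.rpow_mul (Q4_nonneg z),
      show (1:ℝ)/4 * (4:ℕ) = 1 by norm_num, Real.rpow_one] at this
  refine (pi_norm_le_iff_of_nonneg (by positivity)).2 fun k => ?_
  have hz2 : z.2 k = -(y.2 k) + h.2 k - (1/2) * ∑ i, (J k).mulVec y.1 i * h.1 i := by
    simp [hz, gmul, Matrix.mulVec_neg]
    ring
  have hzk : |z.2 k| ≤ r ^ 2 := by
    refine abs_le_of_sq_le_sq ?_ (by positivity)
    have h1 := sq_le_sqN z.2 k
    have h2 : Q4 z = sqN z.1 ^ 2 + 16 * sqN z.2 := rfl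
    nlinarith [sq_nonneg (sqN z.1), sqN_nonneg z.2]
  have hw : |∑ i, (J k).mulVec y.1 i * h.1 i| ≤ (hsJ J + 1) * K := by
    refine abs_le_of_sq_le_sq ?_ (by positivity)
    have h1 : (∑ i, (J k).mulVec y.1 i * h.1 i) ^ 2
        ≤ (∑ i, (J k).mulVec y.1 i ^ 2) * sqN h.1 := Finset.sum_mul_sq_le_sq_mul_sq _ _ _
    have h2 : ∑ i, (J k).mulVec y.1 i ^ 2 ≤ hsJ J * sqN y.1 :=
      (Finset.single_le_sum (f := fun k => ∑ i, (J k).mulVec y.1 i ^ 2)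
        (fun _ _ => Finset.sum_nonneg fun _ _ => sq_nonneg _) (Finset.mem_univ k)).trans
        (sum_mulVec_sq_le J y.1)
    have h3 : hsJ J * sqN y.1 ≤ hsJ J * K := by gcongr
    calc _ ≤ (hsJ J * K) * K := h1.trans
          (mul_le_mul (h2.trans h3) hh (sqN_nonneg _) (by positivity))
      _ ≤ _ := by nlinarith [mul_nonneg hB0 (mul_nonneg hK.le hK.le),
          mul_nonneg (mul_nonneg hB0 hB0) (mul_nonneg hK.le hK.le), mul_nonneg hK.le hK.le]
  have he : (h.2 - y.2) k = z.2 k + (1/2) * ∑ i, (J k).mulVec y.1 i * h.1 i := by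
    rw [hz2, Pi.sub_apply]; ring
  rw [he, Real.norm_eq_abs, abs_le]
  rw [abs_le] at hzk hw
  have : 0 ≤ (hsJ J + 1) * K := by positivity
  constructor <;> linarith [hzk.1, hzk.2, hw.1, hw.2]

/-- Volume bound for the slices of the sublevel set, `|Ω ∩ B(y,r)| ≤ A (1 + ‖t_y‖)^(-n(α-2))`:
the slice lies in the product of a ball of radius `~ (1 + ‖t_y‖)^(-(α-2)/2)` in `ℝ^{2n}` and a ball
of fixed radius in `ℝ^m`. -/
lemma exists_volume_le (hskew : ∀ k, (J k).transpose = -(J k))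
    (hMet : ∀ t : Fin m → ℝ, t ≠ 0 → IsUnit (∑ k, t k • J k)) {α : ℝ} (hα : 2 < α)
    {M : ℝ} (hM : 0 < M) {r : ℝ} (hr : 0 < r) :
    ∃ A : ℝ, 0 < A ∧ ∀ y ∈ OmegaSet J α M,
      volume (OmegaSet J α M ∩ kBall J y r)
        ≤ ENNReal.ofReal (A * (1 + ‖y.2‖) ^ (-((n:ℝ) * (α - 2)))) := by
  obtain ⟨K, hK, hΩ⟩ := exists_OmegaSet_bound J hskew hMet hα hM
  obtain ⟨D, hD, hdist⟩ := exists_central_dist J hK hr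
  have hle : ∀ p ∈ OmegaSet J α M, sqN p.1 ≤ K := fun p hp =>
    (le_mul_of_one_le_right (sqN_nonneg _)
      (Real.one_le_rpow (by linarith [norm_nonneg p.2]) (by linarith))).trans (hΩ p hp)
  set K' := K * (1 + D) ^ (α - 2) with hK'
  have hK'0 : 0 < K' := by positivity
  refine ⟨(4 * K') ^ n * (2 * D) ^ m, by positivity, fun y hy => ?_⟩
  set s := 1 + ‖y.2‖ with hs
  have hs0 : 0 < s := by positivity
  have hsub : OmegaSet J α M ∩ kBall J y r ⊆
      Metric.closedBall 0 √(K' * s ^ (-(α - 2))) ×ˢ Metric.closedBall y.2 D := by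
    rintro h ⟨hh, hb⟩
    have hd := hdist y h (hle y hy) (hle h hh) hb
    refine ⟨?_, by simpa [dist_eq_norm] using hd⟩
    rw [mem_closedBall_zero_iff]
    refine Real.le_sqrt_of_sq_le ((norm_sq_le_sqN h.1).trans ?_)
    have h1 : s ≤ (1 + D) * (1 + ‖h.2‖) := by
      have := norm_le_norm_add_norm_sub h.2 y.2
      nlinarith [norm_nonneg h.2, norm_nonneg y.2]
    have h2 : s ^ (α - 2) ≤ (1 + D) ^ (α - 2) * (1 + ‖h.2‖) ^ (α - 2) := by
      rw [← Real.mul_rpow (by positivity) (by positivity)]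
      exact Real.rpow_le_rpow hs0.le h1 (by linarith)
    rw [Real.rpow_neg hs0.le, ← div_eq_mul_inv, le_div_iff₀ (by positivity)]
    calc sqN h.1 * s ^ (α - 2)
        ≤ sqN h.1 * ((1 + D) ^ (α - 2) * (1 + ‖h.2‖) ^ (α - 2)) :=
          mul_le_mul_of_nonneg_left h2 (sqN_nonneg _)
      _ = (sqN h.1 * (1 + ‖h.2‖) ^ (α - 2)) * (1 + D) ^ (α - 2) := by ring
      _ ≤ K' := mul_le_mul_of_nonneg_right (hΩ h hh) (by positivity)
  refine (measure_mono hsub).trans_eq ?_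
  rw [Measure.volume_eq_prod, Measure.prod_prod, Real.volume_pi_closedBall _ (Real.sqrt_nonneg _),
    Real.volume_pi_closedBall _ hD.le, ← ENNReal.ofReal_mul (by positivity)]
  congr 1
  have hX : s ^ (-((n:ℝ) * (α - 2))) = (s ^ (-(α - 2))) ^ n := by
    rw [← Real.rpow_natCast, ← Real.rpow_mul hs0.le]; congr 1; ring
  rw [Fintype.card_fin, Fintype.card_fin, pow_mul, mul_pow, Real.sq_sqrt (by positivity), hX]
  simp only [mul_pow]
  norm_num
  ring

end Bounds

/-! ### Integrability -/

/-- For `α > 2` the sublevel sets of `V_α` are `ℓ`-polynomially thin for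
`ℓ > m / (n(α-2))`. -/
theorem sublevel_polynomially_thin (n m : ℕ) (hn : 1 ≤ n) (hm : 1 ≤ m)
    (J : Fin m → Matrix (Fin (2*n)) (Fin (2*n)) ℝ)
    (hskew : ∀ k, (J k).transpose = -(J k))
    (hMet : ∀ t : Fin m → ℝ, t ≠ 0 → IsUnit (∑ k, t k • J k))
    (α : ℝ) (hα : 2 < α) :
    ∀ M : ℝ, 0 < M → ∀ r : ℝ, 0 < r → ∀ ℓ : ℝ, (m:ℝ) / ((n:ℝ) * (α - 2)) < ℓ →
      ∫⁻ y in OmegaSet J α M, (volume (OmegaSet J α M ∩ kBall J y r)) ^ ℓ ∂volume < ⊤ := by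
  intro M hM r hr ℓ hℓ
  obtain ⟨K, hK, hΩ⟩ := exists_OmegaSet_bound J hskew hMet hα hM
  obtain ⟨A, hA, hvol⟩ := exists_volume_le J hskew hMet hα hM hr
  have hn0 : (0:ℝ) < n := by exact_mod_cast hn
  have hα2 : 0 < α - 2 := by linarith
  have hℓ0 : 0 < ℓ := lt_of_le_of_lt (by positivity) hℓ
  have hs : (m:ℝ) < (n:ℝ) * (α - 2) * ℓ := by
    rwa [div_lt_iff₀ (by positivity), mul_comm] at hℓ
  set s := (n:ℝ) * (α - 2) * ℓ with hsdef
  have hsub : OmegaSet J α M ⊆ Metric.closedBall (0 : Fin (2*n) → ℝ) √K ×ˢ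
      (Set.univ : Set (Fin m → ℝ)) := by
    intro p hp
    refine ⟨?_, trivial⟩
    rw [mem_closedBall_zero_iff]
    exact Real.le_sqrt_of_sq_le ((norm_sq_le_sqN p.1).trans ((le_mul_of_one_le_right (sqN_nonneg _)
      (Real.one_le_rpow (by linarith [norm_nonneg p.2]) hα2.le)).trans (hΩ p hp)))
  have hmeas : Measurable fun t : Fin m → ℝ => ENNReal.ofReal ((1 + ‖t‖) ^ (-s)) := by fun_prop
  calc ∫⁻ y in OmegaSet J α M, (volume (OmegaSet J α M ∩ kBall J y r)) ^ ℓ ∂volume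
      ≤ ∫⁻ y in OmegaSet J α M,
          ENNReal.ofReal (A ^ ℓ) * ENNReal.ofReal ((1 + ‖y.2‖) ^ (-s)) ∂volume := by
        refine setLIntegral_mono ((hmeas.comp measurable_snd).const_mul _) fun y hy => ?_
        refine (ENNReal.rpow_le_rpow (hvol y hy) hℓ0.le).trans_eq ?_
        rw [ENNReal.ofReal_rpow_of_pos (by positivity), Real.mul_rpow hA.le (by positivity),
          ← Real.rpow_mul (by positivity), ENNReal.ofReal_mul (by positivity), hsdef, neg_mul]
    _ ≤ ∫⁻ y in Metric.closedBall (0 : Fin (2*n) → ℝ) √K ×ˢ (Set.univ : Set (Fin m → ℝ)),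
          ENNReal.ofReal (A ^ ℓ) * ENNReal.ofReal ((1 + ‖y.2‖) ^ (-s)) ∂volume :=
        lintegral_mono_set hsub
    _ = ENNReal.ofReal (A ^ ℓ) * volume (Metric.closedBall (0 : Fin (2*n) → ℝ) √K)
          * ∫⁻ t : Fin m → ℝ, ENNReal.ofReal ((1 + ‖t‖) ^ (-s)) := by
        rw [Measure.volume_eq_prod, ← Measure.prod_restrict, Measure.restrict_univ]
        rw [lintegral_prod_mul (f := fun _ => ENNReal.ofReal (A ^ ℓ)) aemeasurable_const
          hmeas.aemeasurable]
        simp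
    _ < ⊤ := ENNReal.mul_lt_top (ENNReal.mul_lt_top ENNReal.ofReal_lt_top
          measure_closedBall_lt_top) (finite_integral_one_add_norm (by simpa using hs))

end
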